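/- Fix reals ρ > 0 and θ > 0 and natural numbers 1 ≤ m < n*. Let Δ = (m+ρ+θ)² − 4mρ > 0, Z₊ = [ρ+θ+m + √Δ]/(2ρ), Z₋ = [ρ+θ+m − √Δ]/(2ρ), and let D = ρ F_m(θ)[Z₊ Z₋^{n*−m} − Z₋ Z₊^{n*−m}] + (m+1) F_{m+1}(θ)[Z₊^{n*−m} − Z₋^{n*−m}]; assume D ≠ 0. Define Q̂_n = ρ^{m−n}(n!/m!) √Δ F_n(θ)/D for 0 ≤ n ≤ m, and Q̂_n = (ρ F_m(θ)[Z₊ Z₋^{n−m} − Z₋ Z₊^{n−m}] + (m+1) F_{m+1}(θ)[Z₊^{n−m} − Z₋^{n−m}])/D for m ≤ n ≤ n*. Then the two formulas agree at n = m, and: Q̂_{n*} = 1; ρ Q̂_1 = (ρ+θ) Q̂_0; (ρ+n+θ) Q̂_n = ρ Q̂_{n+1} + n Q̂_{n−1} for 1 ≤ n ≤ m; and (ρ+m+θ) Q̂_n = ρ Q̂_{n+1} + m Q̂_{n−1} for m ≤ n ≤ n*−1. -/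

import Mathlib

open Finset

/-- F_n(θ) = Σ_{ℓ=0}^{n} [ρ^{n−ℓ}/((n−ℓ)! ℓ!)] (θ)_ℓ, with (θ)_ℓ the rising factorial. -/
noncomputable def erlF (ρ θ : ℝ) (n : ℕ) : ℝ :=
  ∑ ℓ ∈ Finset.range (n + 1),
    ρ ^ (n - ℓ) / ((n - ℓ).factorial * ℓ.factorial) * (ascPochhammer ℝ ℓ).eval θ

lemma erlF_anti (ρ θ : ℝ) (n : ℕ) : erlF ρ θ n = ∑ p ∈ antidiagonal n,
    (ρ ^ p.1 / p.1.factorial) * ((ascPochhammer ℝ p.2).eval θ / p.2.factorial) := by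
  rw [Finset.Nat.sum_antidiagonal_eq_sum_range_succ_mk, ← Finset.sum_range_reflect, erlF]
  apply Finset.sum_congr rfl
  intro l hl
  have : l ≤ n := by simpa [Nat.lt_succ_iff] using hl
  have e1 : n + 1 - 1 - l = n - l := by omega
  have e2 : n - (n - l) = l := by omega
  simp only [e1, e2]
  rw [div_mul_div_comm, div_mul_eq_mul_div]

lemma erlF_A (ρ θ : ℝ) (n : ℕ) : ∑ p ∈ antidiagonal (n + 1), (p.1 : ℝ) *
    ((ρ ^ p.1 / p.1.factorial) * ((ascPochhammer ℝ p.2).eval θ / p.2.factorial))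
    = ρ * erlF ρ θ n := by
  rw [Finset.Nat.sum_antidiagonal_succ, erlF_anti, Finset.mul_sum]
  simp only [Nat.cast_zero, zero_mul, zero_add]
  apply Finset.sum_congr rfl
  intro p _
  have h : (p.1.factorial : ℝ) ≠ 0 := by positivity
  have h' : (p.2.factorial : ℝ) ≠ 0 := by positivity
  rw [Nat.factorial_succ]
  push_cast
  have h2 : (p.1 : ℝ) + 1 ≠ 0 := by positivity
  field_simp
  ring

lemma erlF_B (ρ θ : ℝ) (n : ℕ) : ∑ p ∈ antidiagonal (n + 1), (p.2 : ℝ) *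
    ((ρ ^ p.1 / p.1.factorial) * ((ascPochhammer ℝ p.2).eval θ / p.2.factorial))
    = θ * erlF ρ θ n + ∑ p ∈ antidiagonal n, (p.2 : ℝ) *
    ((ρ ^ p.1 / p.1.factorial) * ((ascPochhammer ℝ p.2).eval θ / p.2.factorial)) := by
  rw [Finset.Nat.sum_antidiagonal_succ', erlF_anti, Finset.mul_sum, ← Finset.sum_add_distrib]
  simp only [Nat.cast_zero, zero_mul, add_zero, zero_add]
  apply Finset.sum_congr rfl
  intro p _
  have h : (p.1.factorial : ℝ) ≠ 0 := by positivity
  have h' : (p.2.factorial : ℝ) ≠ 0 := by positivity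
  rw [Nat.factorial_succ, ascPochhammer_succ_eval]
  push_cast
  have h2 : (p.2 : ℝ) + 1 ≠ 0 := by positivity
  field_simp
  try ring

lemma erlF_C (ρ θ : ℝ) (n : ℕ) : (n : ℝ) * erlF ρ θ n = (∑ p ∈ antidiagonal n, (p.1 : ℝ) *
    ((ρ ^ p.1 / p.1.factorial) * ((ascPochhammer ℝ p.2).eval θ / p.2.factorial)))
    + ∑ p ∈ antidiagonal n, (p.2 : ℝ) *
    ((ρ ^ p.1 / p.1.factorial) * ((ascPochhammer ℝ p.2).eval θ / p.2.factorial)) := by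
  rw [erlF_anti, Finset.mul_sum, ← Finset.sum_add_distrib]
  apply Finset.sum_congr rfl
  intro p hp
  rw [← mem_antidiagonal.mp hp]
  push_cast
  ring

lemma erlF_rec (ρ θ : ℝ) (n : ℕ) : (ρ + (n + 1 : ℕ) + θ) * erlF ρ θ (n + 1)
    = ((n : ℝ) + 2) * erlF ρ θ (n + 2) + ρ * erlF ρ θ n := by
  have h1 := erlF_C ρ θ (n + 1)
  have h2 := erlF_C ρ θ (n + 2)
  rw [erlF_A] at h1 h2
  rw [erlF_B ρ θ (n+1)] at h2
  push_cast at *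
  linarith

/-- the explicit family Q̂_n solves the Laplace-transformed backward
Kolmogorov system for the first passage time to level n* of the M/M/m queue;
moreover Δ > 0 and the two defining formulas agree at n = m. -/
theorem mmm_first_passage_transform_solves_system (ρ θ : ℝ) (hρ : 0 < ρ) (hθ : 0 < θ)
    (m nst : ℕ) (hm : 1 ≤ m) (hmn : m < nst)
    (Δ Zp Zm D : ℝ)
    (hΔ : Δ = ((m : ℝ) + ρ + θ) ^ 2 - 4 * m * ρ)
    (hZp : Zp = (ρ + θ + m + Real.sqrt Δ) / (2 * ρ))
    (hZm : Zm = (ρ + θ + m - Real.sqrt Δ) / (2 * ρ))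
    (hD : D = ρ * erlF ρ θ m * (Zp * Zm ^ (nst - m) - Zm * Zp ^ (nst - m))
      + ((m : ℝ) + 1) * erlF ρ θ (m + 1) * (Zp ^ (nst - m) - Zm ^ (nst - m)))
    (hD0 : D ≠ 0)
    (f1 f2 Q : ℕ → ℝ)
    (hf1 : ∀ n : ℕ, f1 n = ρ ^ (m - n) * ((n.factorial : ℝ) / m.factorial) *
      Real.sqrt Δ * erlF ρ θ n / D)
    (hf2 : ∀ n : ℕ, f2 n = (ρ * erlF ρ θ m * (Zp * Zm ^ (n - m) - Zm * Zp ^ (n - m))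
      + ((m : ℝ) + 1) * erlF ρ θ (m + 1) * (Zp ^ (n - m) - Zm ^ (n - m))) / D)
    (hQ : ∀ n : ℕ, Q n = if n ≤ m then f1 n else f2 n) :
    0 < Δ
    ∧ f1 m = f2 m
    ∧ Q nst = 1
    ∧ ρ * Q 1 = (ρ + θ) * Q 0
    ∧ (∀ n : ℕ, 1 ≤ n → n ≤ m →
        (ρ + n + θ) * Q n = ρ * Q (n + 1) + (n : ℝ) * Q (n - 1))
    ∧ ∀ n : ℕ, m ≤ n → n ≤ nst - 1 →
        (ρ + m + θ) * Q n = ρ * Q (n + 1) + (m : ℝ) * Q (n - 1) := by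
  have hs : 0 < Δ := by
    rw [hΔ]
    have : (0 : ℝ) < m := by exact_mod_cast hm
    nlinarith [sq_nonneg ((m : ℝ) - ρ), mul_pos hθ this, mul_pos hθ hρ, mul_pos hθ hθ]
  have hsq : Real.sqrt Δ ^ 2 = Δ := Real.sq_sqrt hs.le
  have hdiff : ρ * (Zp - Zm) = Real.sqrt Δ := by
    rw [hZp, hZm]; field_simp; ring
  have qp : (ρ + m + θ) * Zp = ρ * Zp ^ 2 + m := by
    rw [hZp]; field_simp; nlinarith
  have qm : (ρ + m + θ) * Zm = ρ * Zm ^ 2 + m := by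
    rw [hZm]; field_simp; nlinarith
  have hmf : (m.factorial : ℝ) ≠ 0 := by positivity
  have hag : f1 m = f2 m := by
    rw [hf1, hf2, ← hdiff]
    simp only [Nat.sub_self, pow_zero]
    field_simp
    ring
  have hQ1 : ∀ n, n ≤ m → Q n = f1 n := fun n h => by rw [hQ, if_pos h]
  have hQ2 : ∀ n, m ≤ n → Q n = f2 n := fun n h => by
    rcases h.eq_or_lt with h | h
    · rw [← h, hQ1 m le_rfl, hag]
    · rw [hQ, if_neg (by omega)]
  -- the value at m+1 agrees with the extension of the first formula
  have hf2s : ρ * f2 (m + 1) = ((m : ℝ) + 1) * Real.sqrt Δ * erlF ρ θ (m + 1) / D := by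
    rw [hf2, ← hdiff]
    simp only [Nat.add_sub_cancel_left, pow_one]
    field_simp
    ring
  have hrec : ∀ n : ℕ, 1 ≤ n → n ≤ m →
        (ρ + n + θ) * Q n = ρ * Q (n + 1) + (n : ℝ) * Q (n - 1) := by
    intro n h1 hn
    obtain ⟨k, rfl⟩ : ∃ k, n = k + 1 := ⟨n - 1, by omega⟩
    have hr := erlF_rec ρ θ k
    have hnext : ρ * Q (k + 1 + 1) = ρ ^ (m - (k + 1)) * (((k + 1).factorial : ℝ) / m.factorial) *
        Real.sqrt Δ * (((k : ℝ) + 2) * erlF ρ θ (k + 2)) / D := by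
      rcases hn.eq_or_lt with h | h
      · subst h
        rw [hQ2 _ (by omega), hf2s, Nat.sub_self, pow_zero, div_self hmf]
        push_cast
        ring
      · rw [hQ1 _ h, hf1, Nat.factorial_succ (k + 1)]
        have e : m - (k + 1) = (m - (k + 1 + 1)) + 1 := by omega
        rw [e, pow_succ]
        push_cast
        ring
    rw [hnext, hQ1 _ hn, Nat.add_sub_cancel, hQ1 k (by omega), hf1, hf1]
    have e : m - k = (m - (k + 1)) + 1 := by omega
    rw [e, pow_succ, Nat.factorial_succ]
    push_cast at hr ⊢
    linear_combination (ρ ^ (m - (k + 1)) * (((k + 1) * k.factorial : ℝ) / m.factorial) *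
        Real.sqrt Δ / D) * hr
  refine ⟨hs, hag, ?_, ?_, hrec, ?_⟩
  · rw [hQ2 _ hmn.le, hf2, ← hD, div_self hD0]
  · rw [hQ1 1 hm, hQ1 0 (by omega), hf1, hf1]
    have e : m - 0 = (m - 1) + 1 := by omega
    have h0 : erlF ρ θ 0 = 1 := by simp [erlF]
    have h1 : erlF ρ θ 1 = ρ + θ := by simp [erlF, Finset.sum_range_succ]
    rw [e, pow_succ, h0, h1]
    simp only [Nat.factorial_zero, Nat.factorial_one]
    ring
  · intro n h1 h2
    rcases h1.eq_or_lt with h | h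
    · subst h
      exact hrec m hm le_rfl
    · obtain ⟨k, rfl⟩ : ∃ k, n = m + k + 1 := ⟨n - m - 1, by omega⟩
      rw [hQ2 _ (by omega), hQ2 _ (by omega), hQ2 _ (by omega), hf2, hf2, hf2]
      have e1 : m + k + 1 - m = k + 1 := by omega
      have e2 : m + k + 1 + 1 - m = k + 2 := by omega
      have e3 : m + k + 1 - 1 - m = k := by omega
      rw [e1, e2, e3]
      linear_combination (ρ * erlF ρ θ m * Zp - ((m : ℝ) + 1) * erlF ρ θ (m + 1)) * Zm ^ k / D * qm
        + (((m : ℝ) + 1) * erlF ρ θ (m + 1) - ρ * erlF ρ θ m * Zm) * Zp ^ k / D * qp
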